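/- Extended discrete orthogonality (Remark 3.4): if λ ∈ Λ^{(m+1,n)} has λ_1 = m+1, then P_λ(x_λ̂^{(m,n)}) = 0 for every λ̂ ∈ Λ^{(m,n)}; consequently, for every λ ∈ Λ^{(m+1,n)} and μ ∈ Λ^{(m,n)}, Σ_{λ̂ ∈ Λ^{(m,n)}} P_λ(x_λ̂^{(m,n)}) P_μ(x_λ̂^{(m,n)}) W_λ̂ equals 1 if μ = λ and 0 if μ ≠ λ. -/

import Mathlib

open MeasureTheory Real Finset

noncomputable section

/-- Vandermonde product `∏_{j<k} (x_j - x_k)`. -/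
def vand (n : ℕ) (x : Fin n → ℝ) : ℝ :=
  ∏ j : Fin n, ∏ k ∈ Finset.univ.filter (fun k => j < k), (x j - x k)

/-- The determinant `det [p_{λ_j + n - j}(x_k)]_{1 ≤ j,k ≤ n}`. -/
def schurDet (n : ℕ) (p : ℕ → Polynomial ℝ) (lam : Fin n → ℕ) (x : Fin n → ℝ) : ℝ :=
  Matrix.det (Matrix.of fun j k : Fin n => (p (lam j + (n - 1 - (j : ℕ)))).eval (x k))

/-- The fundamental alcove `Λ^{(m,n)}` : decreasing sequences with entries ≤ m. -/
def Lam (m n : ℕ) : Finset (Fin n → ℕ) :=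
  (Fintype.piFinset fun _ => Finset.range (m + 1)).filter
    fun lam => ∀ i j : Fin n, i ≤ j → lam j ≤ lam i

/-- The node `x^{(m,n)}_λ̂` with `j`-th component `x^{(m+n)}_{λ̂_j + n - j}`. -/
def node (n : ℕ) (xr : ℕ → ℝ) (lh : Fin n → ℕ) : Fin n → ℝ :=
  fun j => xr (lh j + (n - 1 - (j : ℕ)))

/-- Christoffel weight `(∑_{k=0}^{N-1} p_k(x_ℓ)²)⁻¹`. -/
def chrW (p : ℕ → Polynomial ℝ) (N : ℕ) (xr : ℕ → ℝ) (l : ℕ) : ℝ :=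
  (∑ k ∈ Finset.range N, ((p k).eval (xr l)) ^ 2)⁻¹

/-! Gauss quadrature at the zeros of `p_{m+n}` is exact in degree `< 2(m+n)`, so the polynomials
`p_0, …, p_{m+n-1}` are orthonormal for the discrete inner product carried by the zeros with the
Christoffel weights. By the Cauchy–Binet formula, orthonormality of one-variable functions passes to
their `n × n` determinants, summed over strictly decreasing tuples of zeros; adding the staircase
`(n-1, …, 1, 0)` matches these tuples with `Λ^{(m,n)}`, and the squared Vandermonde factor in the
weight turns the Schur polynomials into the determinants. If `λ_1 = m + 1`, the first row of the
determinant consists of values of `p_{m+n}` at its zeros. -/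

section CauchyBinet

variable {ι κ R : Type*} [LinearOrder ι] [LinearOrder κ] [CommRing R] {n : ℕ}

open Classical in
/-- The strictly decreasing `n`-tuples with entries in `s`; they index the `n`-element subsets of
`s`, hence the maximal minors in the Cauchy–Binet formula. -/
def strictAntiTuples (n : ℕ) (s : Finset ι) : Finset (Fin n → ι) :=
  {f ∈ Fintype.piFinset fun _ => s | StrictAnti f}

lemma mem_strictAntiTuples {s : Finset ι} {f : Fin n → ι} :
    f ∈ strictAntiTuples n s ↔ (∀ i, f i ∈ s) ∧ StrictAnti f := by
  simp [strictAntiTuples]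

lemma strictAnti_eq_of_eq_comp_perm {f g : Fin n → ι} (hf : StrictAnti f) (hg : StrictAnti g)
    (σ : Equiv.Perm (Fin n)) (h : f = g ∘ σ) : f = g := by
  subst h
  exact Tuple.unique_antitone (τ := Equiv.refl _) hf.antitone hg.antitone

lemma exists_perm_strictAnti_comp {f : Fin n → ι} (hf : Function.Injective f) :
    ∃ σ : Equiv.Perm (Fin n), StrictAnti (f ∘ σ) :=
  ⟨Fin.revPerm.trans (Tuple.sort f),
    ((Tuple.monotone_sort f).strictMono_of_injective
      (hf.comp (Tuple.sort f).injective)).comp_strictAnti Fin.rev_strictAnti⟩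

open Classical in
lemma sum_injective_eq_sum_strictAntiTuples_perm {M : Type*} [AddCommMonoid M] (s : Finset ι)
    (F : (Fin n → ι) → M) :
    ∑ f ∈ Fintype.piFinset fun _ : Fin n => s with Function.Injective f, F f =
      ∑ f ∈ strictAntiTuples n s, ∑ σ : Equiv.Perm (Fin n), F (f ∘ σ) := by
  rw [← Finset.sum_product']
  symm
  refine Finset.sum_nbij (fun q => q.1 ∘ q.2) ?maps ?inj ?surj fun _ _ => rfl
  case maps =>
    rintro ⟨f, σ⟩ hq
    obtain ⟨hfs, hf⟩ := mem_strictAntiTuples.1 (mem_product.1 hq).1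
    simpa using ⟨fun i => hfs (σ i), hf.injective⟩
  case inj =>
    rintro ⟨f, σ⟩ hf ⟨g, τ⟩ hg (hfg : f ∘ σ = g ∘ τ)
    replace hf := (mem_strictAntiTuples.1 (mem_product.1 hf).1).2
    replace hg := (mem_strictAntiTuples.1 (mem_product.1 hg).1).2
    obtain rfl : f = g := strictAnti_eq_of_eq_comp_perm hf hg (σ⁻¹.trans τ) <| by
      rw [Equiv.coe_trans, ← Function.comp_assoc, ← hfg]
      ext i
      simp
    exact Prod.ext rfl (Equiv.ext fun i => hf.injective (congrFun hfg i))
  case surj =>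
    intro f hf
    obtain ⟨hfs, hinj⟩ := mem_filter.1 hf
    obtain ⟨σ, hσ⟩ := exists_perm_strictAnti_comp hinj
    refine ⟨(f ∘ σ, σ⁻¹), ?_, by ext; simp⟩
    exact mem_product.2
      ⟨mem_strictAntiTuples.2 ⟨fun i => Fintype.mem_piFinset.1 hfs (σ i), hσ⟩, mem_univ _⟩

lemma det_sum_mul_eq_sum_piFinset {α β : Type*} [Fintype α] [DecidableEq α] (s : Finset β)
    (A B : Matrix α β R) :
    (Matrix.of fun i j => ∑ l ∈ s, A i l * B j l).det =
      ∑ f ∈ Fintype.piFinset fun _ : α => s,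
        (∏ i, A i (f i)) * (B.submatrix id f).det := by
  classical
  have hrows : (Matrix.of fun i j => ∑ l ∈ s, A i l * B j l) =
      fun i => ∑ l ∈ s, fun j => A i l * B j l := by
    ext i j
    simp
  rw [hrows]
  refine ((Matrix.detRowAlternating (n := α) (R := R)).toMultilinearMap.map_sum_finset
    (fun i l j => A i l * B j l) fun _ => s).trans (Finset.sum_congr rfl fun f _ => ?_)
  rw [← Matrix.det_transpose (B.submatrix id f)]
  exact Matrix.det_mul_column (fun i => A i (f i)) _

lemma sum_perm_prod_mul_det_submatrix {α β : Type*} [Fintype α] [DecidableEq α]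
    (A B : Matrix α β R) (f : α → β) :
    ∑ σ : Equiv.Perm α, (∏ i, A i (f (σ i))) * (B.submatrix id (f ∘ σ)).det =
      (A.submatrix id f).det * (B.submatrix id f).det := by
  rw [← Matrix.det_transpose (A.submatrix id f), Matrix.det_apply', Finset.sum_mul]
  refine Finset.sum_congr rfl fun σ _ => ?_
  have hperm := Matrix.det_permute' σ (B.submatrix id f)
  rw [Matrix.submatrix_submatrix, Function.comp_id] at hperm
  rw [hperm]
  simp only [Matrix.transpose_apply, Matrix.submatrix_apply, id_eq]
  ring

theorem det_sum_mul_eq_sum_strictAntiTuples (s : Finset ι) (A B : Matrix (Fin n) ι R) :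
    (Matrix.of fun i j => ∑ l ∈ s, A i l * B j l).det =
      ∑ f ∈ strictAntiTuples n s, (A.submatrix id f).det * (B.submatrix id f).det := by
  classical
  rw [det_sum_mul_eq_sum_piFinset, ← Finset.sum_filter_of_ne (p := Function.Injective),
    sum_injective_eq_sum_strictAntiTuples_perm]
  · exact Finset.sum_congr rfl fun f _ => sum_perm_prod_mul_det_submatrix A B f
  · intro f _ hne i j hij
    by_contra hij'
    refine hne ?_
    rw [Matrix.det_zero_of_column_eq hij' fun k => by simp [hij], mul_zero]

lemma det_of_ite_eq_of_strictAnti {f g : Fin n → ι} (hf : StrictAnti f) (hg : StrictAnti g) :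
    (Matrix.of fun i j => if f i = g j then (1 : R) else 0).det = if f = g then 1 else 0 := by
  split_ifs with hfg
  · subst hfg
    convert Matrix.det_one (n := Fin n) (R := R)
    ext i j
    simp [Matrix.one_apply, hf.injective.eq_iff]
  · obtain ⟨i, hi⟩ : ∃ i, ∀ j, f i ≠ g j := by
      by_contra! hrange
      choose σ hσ using hrange
      have hσinj : Function.Injective σ := fun i j hij =>
        hf.injective (by rw [hσ i, hσ j, hij])
      exact hfg <| strictAnti_eq_of_eq_comp_perm hf hg
        (Equiv.ofBijective σ (Finite.injective_iff_bijective.1 hσinj)) (funext hσ)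
    exact Matrix.det_eq_zero_of_row_eq_zero i fun j => by simp [hi j]

theorem sum_det_mul_det_mul_prod_of_orthonormal {s : Finset ι} {t : Finset κ} {φ : κ → ι → R}
    {ω : ι → R} (hφ : ∀ a ∈ t, ∀ b ∈ t, ∑ l ∈ s, φ a l * φ b l * ω l = if a = b then 1 else 0)
    {α β : Fin n → κ} (hα : α ∈ strictAntiTuples n t) (hβ : β ∈ strictAntiTuples n t) :
    ∑ f ∈ strictAntiTuples n s,
        (Matrix.of fun j k => φ (α j) (f k)).det * (Matrix.of fun j k => φ (β j) (f k)).det *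
          ∏ k, ω (f k) =
      if α = β then 1 else 0 := by
  obtain ⟨hαt, hα⟩ := mem_strictAntiTuples.1 hα
  obtain ⟨hβt, hβ⟩ := mem_strictAntiTuples.1 hβ
  have hcauchyBinet := det_sum_mul_eq_sum_strictAntiTuples s
    (Matrix.of fun j l => φ (α j) l) (Matrix.of fun j l => ω l * φ (β j) l)
  have hgram : (Matrix.of fun i j => ∑ l ∈ s, φ (α i) l * (ω l * φ (β j) l)) =
      Matrix.of fun i j => if α i = β j then (1 : R) else 0 := by
    ext i j
    rw [Matrix.of_apply, Matrix.of_apply, ← hφ _ (hαt i) _ (hβt j)]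
    exact Finset.sum_congr rfl fun l _ => by ring
  simp only [Matrix.of_apply] at hcauchyBinet
  rw [← det_of_ite_eq_of_strictAnti hα hβ, ← hgram, hcauchyBinet]
  refine Finset.sum_congr rfl fun f _ => ?_
  have hweights := Matrix.det_mul_row (fun k => ω (f k)) (Matrix.of fun j k => φ (β j) (f k))
  rw [mul_assoc, mul_comm (Matrix.det _) (∏ k, ω (f k)), ← hweights]
  rfl

end CauchyBinet

section GaussQuadrature

open Polynomial

variable {K ι : Type*} [Field K] [DecidableEq ι] {L : K[X] →ₗ[K] K} {p : Polynomial.Sequence K}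
  {s : Finset ι} {x : ι → K}

lemma mem_span_of_degree_lt (p : Polynomial.Sequence K) {N : ℕ} {f : K[X]} (hf : f.degree < N) :
    f ∈ Submodule.span K (p '' Set.Iio N) := by
  rw [p.span_degreeLT fun i _ => (leadingCoeff_ne_zero.2 (p.ne_zero i)).isUnit]
  exact mem_degreeLT.2 hf

lemma map_mul_eq_zero_of_degree_lt {N : ℕ} (hL : ∀ k < N, L (p N * p k) = 0) {f : K[X]}
    (hf : f.degree < N) : L (p N * f) = 0 := by
  replace hf := mem_span_of_degree_lt p hf
  induction hf using Submodule.span_induction with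
  | mem f hf => obtain ⟨k, hk, rfl⟩ := hf; exact hL k hk
  | zero => simp
  | add f g _ _ hf hg => rw [mul_add, map_add, hf, hg, add_zero]
  | smul c f _ hf => rw [mul_smul_comm, map_smul, hf, smul_zero]

lemma eq_sum_map_mul_smul (hL : ∀ i j, L (p i * p j) = if i = j then 1 else 0) {N : ℕ} {f : K[X]}
    (hf : f.degree < N) : f = ∑ k ∈ range N, L (f * p k) • p k := by
  replace hf := mem_span_of_degree_lt p hf
  induction hf using Submodule.span_induction with
  | mem f hf =>
    obtain ⟨i, hi, rfl⟩ := hf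
    simp only [hL, ite_smul, one_smul, zero_smul]
    rw [Finset.sum_ite_eq, if_pos (mem_range.2 hi)]
  | zero => simp
  | add f g _ _ hf hg =>
    simp only [add_mul, map_add, add_smul, Finset.sum_add_distrib]
    rw [← hf, ← hg]
  | smul c f _ hf =>
    simp only [smul_mul_assoc, map_smul, smul_assoc, ← Finset.smul_sum]
    rw [← hf]

lemma degree_div_lt_of_degree_lt_add {f g : K[X]} {N : ℕ} (hg : g ≠ 0)
    (hf : f.degree < g.degree + N) : (f / g).degree < N := by
  rcases lt_or_ge f.degree g.degree with hlt | hge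
  · rw [(Polynomial.div_eq_zero_iff hg).2 hlt, degree_zero]
    exact WithBot.bot_lt_coe N
  · rw [← degree_add_div hg hge] at hf
    exact lt_of_add_lt_add_left hf

theorem gauss_quadrature (hL : ∀ k < #s, L (p #s * p k) = 0) (hx : Set.InjOn x s)
    (hroot : ∀ i ∈ s, (p #s).eval (x i) = 0) {f : K[X]} (hf : f.degree < #s + #s) :
    L f = ∑ i ∈ s, f.eval (x i) * L (Lagrange.basis s x i) := by
  have hne := p.ne_zero #s
  have hdivMod : p #s * (f / p #s) + f % p #s = f := EuclideanDomain.div_add_mod f (p #s)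
  have hquot : (f / p #s).degree < #s :=
    degree_div_lt_of_degree_lt_add hne (by rwa [p.degree_eq])
  have hrem : (f % p #s).degree < #s := p.degree_eq #s ▸ EuclideanDomain.mod_lt f hne
  have heval : ∀ i ∈ s, (f % p #s).eval (x i) = f.eval (x i) := fun i hi => by
    rw [← congrArg (eval (x i)) hdivMod, eval_add, eval_mul, hroot i hi, zero_mul, zero_add]
  calc L f = L (f % p #s) := by
        rw [← congrArg L hdivMod, map_add, map_mul_eq_zero_of_degree_lt hL hquot, zero_add]
    _ = L (Lagrange.interpolate s x fun i => f.eval (x i)) :=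
        congrArg L (Lagrange.eq_interpolate_of_eval_eq _ hx hrem heval)
    _ = ∑ i ∈ s, f.eval (x i) * L (Lagrange.basis s x i) := by
        simp [Lagrange.interpolate_apply, ← smul_eq_C_mul]

theorem sum_eval_mul_eval_mul_map_basis (hL : ∀ i j, L (p i * p j) = if i = j then 1 else 0)
    (hx : Set.InjOn x s) (hroot : ∀ i ∈ s, (p #s).eval (x i) = 0) {j k : ℕ} (hj : j < #s)
    (hk : k < #s) :
    ∑ i ∈ s, (p j).eval (x i) * (p k).eval (x i) * L (Lagrange.basis s x i) =
      if j = k then 1 else 0 := by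
  have hdeg : (p j * p k).degree < #s + #s := by
    rw [degree_mul, p.degree_eq, p.degree_eq]
    exact_mod_cast add_lt_add hj hk
  rw [← hL j k, gauss_quadrature (fun l hl => by rw [hL, if_neg hl.ne']) hx hroot hdeg]
  simp only [eval_mul]

lemma map_basis_mul (hL : ∀ k < #s, L (p #s * p k) = 0) (hx : Set.InjOn x s)
    (hroot : ∀ i ∈ s, (p #s).eval (x i) = 0) {i : ι} (hi : i ∈ s) {f : K[X]}
    (hf : f.degree ≤ #s) :
    L (Lagrange.basis s x i * f) = f.eval (x i) * L (Lagrange.basis s x i) := by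
  have hpos : 0 < #s := card_pos.2 ⟨i, hi⟩
  have hdeg : (Lagrange.basis s x i * f).degree < #s + #s := by
    rw [degree_mul, Lagrange.degree_basis hx hi]
    refine (add_le_add_right hf _).trans_lt ?_
    exact_mod_cast Nat.add_lt_add_right (Nat.sub_lt hpos one_pos) #s
  rw [gauss_quadrature hL hx hroot hdeg, Finset.sum_eq_single_of_mem i hi]
  · rw [eval_mul, Lagrange.eval_basis_self hx hi, one_mul]
  · intro j hj hji
    rw [eval_mul, Lagrange.eval_basis_of_ne hji.symm hj, zero_mul, zero_mul]

theorem map_basis_eq_inv_sum_eval_sq (hL : ∀ i j, L (p i * p j) = if i = j then 1 else 0)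
    (hx : Set.InjOn x s) (hroot : ∀ i ∈ s, (p #s).eval (x i) = 0) {i : ι} (hi : i ∈ s) :
    L (Lagrange.basis s x i) = (∑ k ∈ range #s, (p k).eval (x i) ^ 2)⁻¹ := by
  have hdeg : (Lagrange.basis s x i).degree < #s := by
    rw [Lagrange.degree_basis hx hi]
    exact_mod_cast Nat.sub_lt (card_pos.2 ⟨i, hi⟩) one_pos
  have hcoeff : ∀ k ∈ range #s, L (Lagrange.basis s x i * p k) =
      (p k).eval (x i) * L (Lagrange.basis s x i) := fun k hk =>
    map_basis_mul (fun l hl => by rw [hL, if_neg hl.ne']) hx hroot hi <| by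
      rw [p.degree_eq]
      exact_mod_cast (mem_range.1 hk).le
  refine eq_inv_of_mul_eq_one_left ?_
  calc L (Lagrange.basis s x i) * ∑ k ∈ range #s, (p k).eval (x i) ^ 2
      = ∑ k ∈ range #s, L (Lagrange.basis s x i * p k) * (p k).eval (x i) := by
        rw [Finset.mul_sum]
        exact Finset.sum_congr rfl fun k hk => by rw [hcoeff k hk]; ring
    _ = (Lagrange.basis s x i).eval (x i) := by
        conv_rhs => rw [eq_sum_map_mul_smul hL hdeg]
        simp [eval_finsetSum]
    _ = 1 := Lagrange.eval_basis_self hx hi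

end GaussQuadrature

lemma sum_eval_mul_eval_mul_chrW {L : Polynomial ℝ →ₗ[ℝ] ℝ} {p : Polynomial.Sequence ℝ}
    (hL : ∀ i j, L (p i * p j) = if i = j then 1 else 0) {N : ℕ} {xr : ℕ → ℝ}
    (hinj : Set.InjOn xr (range N)) (hroot : ∀ l < N, (p N).eval (xr l) = 0) :
    ∀ i ∈ range N, ∀ j ∈ range N,
      ∑ l ∈ range N, (p i).eval (xr l) * (p j).eval (xr l) * chrW p N xr l =
        if i = j then 1 else 0 := by
  intro i hi j hj
  have hroot' : ∀ l ∈ range N, (p #(range N)).eval (xr l) = 0 := by simpa using hroot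
  rw [← sum_eval_mul_eval_mul_map_basis hL hinj hroot' (by simpa using hi) (by simpa using hj)]
  refine Finset.sum_congr rfl fun l hl => ?_
  rw [map_basis_eq_inv_sum_eval_sq hL hinj hroot' hl, card_range, chrW]

section Staircase

variable {m n : ℕ}

/-- The strictly decreasing sequence `λ_j + n - j` attached to a partition `λ`. Positions are
counted from `0`, so the summand is `n - 1 - j`. -/
def addStaircase (lam : Fin n → ℕ) : Fin n → ℕ := fun j => lam j + (n - 1 - j)

lemma addStaircase_injective : Function.Injective (addStaircase (n := n)) := fun _ _ h =>
  funext fun j => Nat.add_right_cancel (congrFun h j)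

lemma mem_Lam {lam : Fin n → ℕ} : lam ∈ Lam m n ↔ (∀ j, lam j ≤ m) ∧ Antitone lam := by
  simp [Lam, Antitone]

lemma add_val_le_add_val_of_strictAnti {f : Fin n → ℕ} (hf : StrictAnti f) {i j : Fin n}
    (hij : i ≤ j) : f j + j ≤ f i + i := by
  cases n with
  | zero => exact i.elim0
  | succ n =>
    have hanti : Antitone fun k => f k + (k : ℕ) := Fin.antitone_iff_succ_le.2 fun k => by
      have hlt := hf k.castSucc_lt_succ
      simp only [Fin.val_succ, Fin.val_castSucc]
      lia
    exact hanti hij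

lemma addStaircase_mem_strictAntiTuples {lam : Fin n → ℕ} (hlam : lam ∈ Lam m n) :
    addStaircase lam ∈ strictAntiTuples n (range (m + n)) := by
  obtain ⟨hle, hanti⟩ := mem_Lam.1 hlam
  refine mem_strictAntiTuples.2 ⟨fun j => mem_range.2 ?_, fun i j hij => ?_⟩
  · have := hle j
    simp only [addStaircase]
    lia
  · have := hanti hij.le
    simp only [addStaircase]
    lia

lemma exists_mem_Lam_addStaircase_eq {f : Fin n → ℕ}
    (hf : f ∈ strictAntiTuples n (range (m + n))) : ∃ lam ∈ Lam m n, addStaircase lam = f := by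
  obtain ⟨hlt, hanti⟩ := mem_strictAntiTuples.1 hf
  have hstair (j : Fin n) : n - 1 - (j : ℕ) ≤ f j := by
    have hlast := add_val_le_add_val_of_strictAnti hanti
      (show j ≤ ⟨n - 1, Nat.sub_lt j.pos one_pos⟩ from Nat.le_sub_one_of_lt j.isLt)
    lia
  refine ⟨fun j => f j - (n - 1 - j), mem_Lam.2 ⟨fun j => ?_, fun i j hij => ?_⟩,
    funext fun j => Nat.sub_add_cancel (hstair j)⟩
  · have hfirst := add_val_le_add_val_of_strictAnti hanti
      (show ⟨0, j.pos⟩ ≤ j from Nat.zero_le _)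
    have hlt_first := mem_range.1 (hlt ⟨0, j.pos⟩)
    lia
  · have hgap := add_val_le_add_val_of_strictAnti hanti hij
    have hstair_i := hstair i
    lia

lemma image_addStaircase_Lam :
    (Lam m n).image addStaircase = strictAntiTuples n (range (m + n)) := by
  ext f
  rw [mem_image]
  exact ⟨fun ⟨_, hlam, h⟩ => h ▸ addStaircase_mem_strictAntiTuples hlam,
    exists_mem_Lam_addStaircase_eq⟩

lemma mem_Lam_of_mem_Lam_succ {lam : Fin n → ℕ} (hlam : lam ∈ Lam (m + 1) n) (hn : 0 < n)
    (hfirst : lam ⟨0, hn⟩ ≠ m + 1) : lam ∈ Lam m n := by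
  obtain ⟨hle, hanti⟩ := mem_Lam.1 hlam
  have hfirst_le : lam ⟨0, hn⟩ ≤ m := Nat.le_of_lt_succ ((hle _).lt_of_ne hfirst)
  exact mem_Lam.2 ⟨fun j => (hanti (Fin.le_def.2 (Nat.zero_le _))).trans hfirst_le, hanti⟩

lemma node_injective {xr : ℕ → ℝ} (hinj : Set.InjOn xr (range (m + n))) {lh : Fin n → ℕ}
    (hlh : lh ∈ Lam m n) : Function.Injective (node n xr lh) := by
  obtain ⟨hlt, hanti⟩ := mem_strictAntiTuples.1 (addStaircase_mem_strictAntiTuples hlh)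
  exact fun i j hij => hanti.injective (hinj (hlt i) (hlt j) hij)

end Staircase

lemma vand_ne_zero {n : ℕ} {x : Fin n → ℝ} (hx : Function.Injective x) : vand n x ≠ 0 :=
  Finset.prod_ne_zero_iff.2 fun _ _ => Finset.prod_ne_zero_iff.2 fun _ hk =>
    sub_ne_zero.2 (hx.ne (mem_filter.1 hk).2.ne)

lemma schurDet_node_eq_zero {m n : ℕ} (hn : 0 < n) {p : ℕ → Polynomial ℝ} {xr : ℕ → ℝ}
    (hroot : ∀ l < m + n, (p (m + n)).eval (xr l) = 0) {lam lh : Fin n → ℕ}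
    (hfirst : lam ⟨0, hn⟩ = m + 1) (hlh : lh ∈ Lam m n) :
    schurDet n p lam (node n xr lh) = 0 := by
  refine Matrix.det_eq_zero_of_row_eq_zero ⟨0, hn⟩ fun k => ?_
  have hindex : lam ⟨0, hn⟩ + (n - 1 - 0) = m + n := by lia
  rw [Matrix.of_apply, hindex]
  have hlt := (mem_strictAntiTuples.1 (addStaircase_mem_strictAntiTuples hlh)).1 k
  exact hroot _ (mem_range.1 hlt)

theorem sum_schurDet_mul_schurDet_mul_prod_chrW {m n : ℕ} {L : Polynomial ℝ →ₗ[ℝ] ℝ}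
    {p : Polynomial.Sequence ℝ} (hL : ∀ i j, L (p i * p j) = if i = j then 1 else 0)
    {xr : ℕ → ℝ} (hinj : Set.InjOn xr (range (m + n)))
    (hroot : ∀ l < m + n, (p (m + n)).eval (xr l) = 0) {lam mu : Fin n → ℕ}
    (hlam : lam ∈ Lam m n) (hmu : mu ∈ Lam m n) :
    ∑ lh ∈ Lam m n, schurDet n p lam (node n xr lh) * schurDet n p mu (node n xr lh) *
        ∏ j, chrW p (m + n) xr (addStaircase lh j) =
      if mu = lam then 1 else 0 := by
  have horth := sum_det_mul_det_mul_prod_of_orthonormal (sum_eval_mul_eval_mul_chrW hL hinj hroot)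
    (addStaircase_mem_strictAntiTuples hmu) (addStaircase_mem_strictAntiTuples hlam)
  rw [← image_addStaircase_Lam, Finset.sum_image addStaircase_injective.injOn] at horth
  simp only [addStaircase_injective.eq_iff] at horth
  rw [← horth]
  refine Finset.sum_congr rfl fun lh _ => ?_
  rw [mul_comm (schurDet n p lam _)]
  rfl

lemma integrable_eval_mul {μ : Measure ℝ} {w : ℝ → ℝ}
    (hw : ∀ l : ℕ, Integrable (fun x => x ^ l * w x) μ) (f : Polynomial ℝ) :
    Integrable (fun x => f.eval x * w x) μ := by
  simp only [Polynomial.eval_eq_sum_range, Finset.sum_mul, mul_assoc]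
  exact integrable_finsetSum _ fun l _ => (hw l).const_mul _

/-- The moment functional `f ↦ ∫ f w dμ` of a weight all of whose moments are finite. -/
def momentFunctional {μ : Measure ℝ} {w : ℝ → ℝ}
    (hw : ∀ l : ℕ, Integrable (fun x => x ^ l * w x) μ) : Polynomial ℝ →ₗ[ℝ] ℝ where
  toFun f := ∫ x, f.eval x * w x ∂μ
  map_add' f g := by
    simp only [Polynomial.eval_add, add_mul]
    exact integral_add (integrable_eval_mul hw f) (integrable_eval_mul hw g)
  map_smul' c f := by
    simp only [Polynomial.eval_smul, smul_eq_mul, mul_assoc, RingHom.id_apply]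
    exact integral_const_mul c _

theorem generalized_schur_extended_discrete_orthogonality_general
    {n : ℕ} (hn : 0 < n) {m : ℕ} {L : Polynomial ℝ →ₗ[ℝ] ℝ} {p : ℕ → Polynomial ℝ}
    (hdeg : ∀ l, (p l).degree = l) (horth : ∀ l k, L (p l * p k) = if l = k then 1 else 0)
    {xr : ℕ → ℝ} (hinj : Set.InjOn xr (range (m + n)))
    (hroot : ∀ l < m + n, (p (m + n)).eval (xr l) = 0)
    {P : (Fin n → ℕ) → (Fin n → ℝ) → ℝ}
    (hPdet : ∀ lam x, vand n x * P lam x = schurDet n p lam x) :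
    (∀ lam ∈ Lam (m + 1) n, lam ⟨0, hn⟩ = m + 1 →
      ∀ lh ∈ Lam m n, P lam (node n xr lh) = 0) ∧
    (∀ lam ∈ Lam (m + 1) n, ∀ mu ∈ Lam m n,
      (∑ lh ∈ Lam m n,
        P lam (node n xr lh) * P mu (node n xr lh) *
          (vand n (node n xr lh) ^ 2 *
            ∏ j : Fin n, chrW p (m + n) xr (lh j + (n - 1 - (j : ℕ)))))
      = if mu = lam then 1 else 0) := by
  have hvanish : ∀ lam ∈ Lam (m + 1) n, lam ⟨0, hn⟩ = m + 1 →
      ∀ lh ∈ Lam m n, P lam (node n xr lh) = 0 := fun lam _ hfirst lh hlh =>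
    (mul_eq_zero.1 ((hPdet _ _).trans (schurDet_node_eq_zero hn hroot hfirst hlh))).resolve_left
      (vand_ne_zero (node_injective hinj hlh))
  refine ⟨hvanish, fun lam hlam mu hmu => ?_⟩
  by_cases hfirst : lam ⟨0, hn⟩ = m + 1
  · have hne : mu ≠ lam := by
      rintro rfl
      exact absurd ((mem_Lam.1 hmu).1 ⟨0, hn⟩) (by lia)
    rw [if_neg hne]
    exact Finset.sum_eq_zero fun lh hlh => by rw [hvanish lam hlam hfirst lh hlh]; ring
  · rw [← sum_schurDet_mul_schurDet_mul_prod_chrW (p := ⟨p, hdeg⟩) horth hinj hroot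
      (mem_Lam_of_mem_Lam_succ hlam hn hfirst) hmu]
    refine Finset.sum_congr rfl fun lh _ => ?_
    simp only [← hPdet, addStaircase]
    ring

theorem generalized_schur_extended_discrete_orthogonality
    (n : ℕ) (hn : 0 < n) (m : ℕ)
    (a b : ℝ) (hab : a < b)
    (w : ℝ → ℝ)
    (hw_cont : ContinuousOn w (Set.Ioo a b))
    (hw_pos : ∀ x ∈ Set.Ioo a b, 0 < w x)
    (hw_mom : ∀ l : ℕ, IntegrableOn (fun x => x ^ l * w x) (Set.Ioo a b))
    -- the orthonormal polynomials for the weight w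
    (p : ℕ → Polynomial ℝ)
    (hdeg : ∀ l, (p l).degree = l)
    (hlead : ∀ l, 0 < (p l).leadingCoeff)
    (horth : ∀ l k, (∫ x in Set.Ioo a b, (p l).eval x * (p k).eval x * w x)
      = if l = k then 1 else 0)
    -- the ordered roots of p_{m+n} in (a,b)
    (xr : ℕ → ℝ)
    (hxr_mem : ∀ l < m + n, xr l ∈ Set.Ioo a b)
    (hxr_mono : ∀ k l : ℕ, k < l → l < m + n → xr k < xr l)
    (hxr_root : ∀ l < m + n, (p (m + n)).eval (xr l) = 0)
    -- the generalized Schur polynomials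
    (P : (Fin n → ℕ) → (Fin n → ℝ) → ℝ)
    (hPcont : ∀ lam, Continuous (P lam))
    (hPdet : ∀ lam x, vand n x * P lam x = schurDet n p lam x) :
    -- (1) if λ ∈ Λ^{(m+1,n)} has λ_1 = m+1 then P_λ vanishes on all nodes
    (∀ lam ∈ Lam (m + 1) n, lam ⟨0, hn⟩ = m + 1 →
      ∀ lh ∈ Lam m n, P lam (node n xr lh) = 0) ∧
    -- (2) extended discrete orthogonality
    (∀ lam ∈ Lam (m + 1) n, ∀ mu ∈ Lam m n,
      (∑ lh ∈ Lam m n,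
        P lam (node n xr lh) * P mu (node n xr lh) *
          (vand n (node n xr lh) ^ 2 *
            ∏ j : Fin n, chrW p (m + n) xr (lh j + (n - 1 - (j : ℕ)))))
      = if mu = lam then 1 else 0) := by
  exact generalized_schur_extended_discrete_orthogonality_general hn (L := momentFunctional hw_mom)
    hdeg (fun l k => by simpa [momentFunctional] using horth l k)
    (StrictMonoOn.injOn fun k _ l hl hkl => hxr_mono k l hkl (mem_range.1 hl)) hxr_root hPdet

end
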